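/- Let T be a tree whose Fiedler vector f has a characteristic vertex v₀ (f(v₀) = 0 and f nonzero somewhere). Let T₁ and T₂ be the two closed nodal domains of f, each viewed as a tree with boundary vertex v₀. Then the first Dirichlet eigenvalue of each nodal domain equals the algebraic connectivity: ν(T₁) = ν(T₂) = α(T), with the restrictions of ±f to the interior vertices as corresponding Dirichlet eigenvectors. -/

import Mathlib

/-!
Write `L` for the Laplacian, `α` for the algebraic connectivity, and `Q g = g ⬝ L g`. On mean-zero
vectors `Q h ≥ α |h|²` (`kthEig_one_le_form`). The proof rests on the Dirichlet lower bound
`Q g ≥ α |g|²` for every `g` with `g v₀ = 0` (`dirichlet_form_ge`).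

For that bound, the equation `L f = α f` at `v₀` says that `f` sums to zero over the neighbours of
`v₀`, so `v₀` has neighbours `u₁`, `u₂` with `f u₁ > 0 > f u₂`. In a tree, `u₁` and `u₂` lie in
different branches at `v₀`. Let `B` be the branch of `u₁` and `C` the union of the other branches.
The restrictions `f_B` and `f_C` are nonzero, and their Rayleigh quotient is `α` because `f`
vanishes at `v₀`. If `g` is supported in `B`, a combination of `|g|` and `|f_C|` has mean zero;
passing to absolute values does not increase `Q`, and the two supports do not interact, so
`Q g ≥ α |g|²` (`form_ge_of_separated`). The same holds for `g` supported in `C`, and a general `g`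
splits into such pieces.

Consequently `|f|` minimises the Dirichlet form, with `Q |f| = Q f`. Equality of the forms gives
`f u * f v ≥ 0` on each edge, and the first-order condition at a zero `u ≠ v₀` of `f` gives `f = 0`
on all neighbours of `u` (`sign_edge`). Hence each closed nodal domain contains all neighbours of
its vertices other than `v₀`, so that its Dirichlet matrix acts as `L` on vectors vanishing at `v₀`
(`dirichletMatrix_mulVec`): `f` is an eigenvector there, and the lower bound makes `α` the smallest
eigenvalue (`minEig_eq_of_le`).
-/

open Matrix BigOperators
open scoped Classical

/-- Weighted Laplacian of a weight function. -/
noncomputable def wLap {V : Type*} [Fintype V] [DecidableEq V] (w : V → V → ℝ) : Matrix V V ℝ :=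
  Matrix.diagonal (fun v => ∑ u, w v u) - Matrix.of w

/-- The `k`-th smallest eigenvalue of a real matrix (0 if not Hermitian / out of range). -/
noncomputable def kthEig {W : Type*} [Fintype W] [DecidableEq W] (A : Matrix W W ℝ) (k : ℕ) : ℝ :=
  if hA : A.IsHermitian then
    if h : k < Fintype.card W then
      (let g : Fin (Fintype.card W) → ℝ := hA.eigenvalues ∘ (Fintype.equivFin W).symm
       (g ∘ Tuple.sort g) ⟨k, h⟩)
    else 0
  else 0

noncomputable def minEig {W : Type*} [Fintype W] [DecidableEq W] (A : Matrix W W ℝ) : ℝ := kthEig A 0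

/-- algebraic connectivity of a simple graph -/
noncomputable def algConn {V : Type*} [Fintype V] [DecidableEq V] (G : SimpleGraph V) : ℝ :=
  kthEig (G.lapMatrix ℝ) 1

/-- Dirichlet matrix: weighted Laplacian restricted to an interior set `S`. -/
noncomputable def dirichletMatrix {V : Type*} [Fintype V] [DecidableEq V]
    (w : V → V → ℝ) (S : Set V) : Matrix S S ℝ :=
  (wLap w).submatrix Subtype.val Subtype.val

noncomputable def degSeq {V : Type*} [Fintype V] [DecidableEq V] (G : SimpleGraph V) : Multiset ℕ :=
  Finset.univ.val.map (fun v => G.degree v)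

/-! ### Eigenvalues of Hermitian matrices -/

/-- Spectral expansion of the standard and of the `A`-bilinear form in an orthonormal eigenbasis. -/
lemma spectral_expansion {W : Type*} [Fintype W] [DecidableEq W] {A : Matrix W W ℝ}
    (hA : A.IsHermitian) : ∃ e : W → W → ℝ,
      (∀ i, A *ᵥ e i = hA.eigenvalues i • e i) ∧ (∀ i, e i ⬝ᵥ e i = 1) ∧
      (∀ x y : W → ℝ, x ⬝ᵥ y = ∑ i, (e i ⬝ᵥ x) * (e i ⬝ᵥ y)) ∧
      (∀ (i : W) (x : W → ℝ), e i ⬝ᵥ (A *ᵥ x) = hA.eigenvalues i * (e i ⬝ᵥ x)) := by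
  refine ⟨fun i => ⇑(hA.eigenvectorBasis i), fun i => hA.mulVec_eigenvectorBasis i, ?_, ?_, ?_⟩
  · intro i
    have h := hA.eigenvectorBasis.orthonormal.1 i
    have h2 := EuclideanSpace.real_norm_sq_eq (hA.eigenvectorBasis i)
    rw [h] at h2
    simp only [dotProduct, ← pow_two]
    linarith
  · intro x y
    have h := hA.eigenvectorBasis.sum_inner_mul_inner (WithLp.toLp 2 x) (WithLp.toLp 2 y)
    simp only [EuclideanSpace.inner_eq_star_dotProduct, star_trivial] at h
    rw [dotProduct_comm x y, ← h]
    refine Finset.sum_congr rfl fun i _ => ?_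
    rw [dotProduct_comm y]
  · intro i x
    have hs : Aᵀ = A := by simpa [Matrix.IsHermitian, conjTranspose_eq_transpose_of_trivial] using hA
    rw [dotProduct_mulVec, ← mulVec_transpose, hs, hA.mulVec_eigenvectorBasis i, smul_dotProduct,
      smul_eq_mul]

/-- `kthEig` lists the eigenvalues of a Hermitian matrix in increasing order. -/
lemma kthEig_enum {W : Type*} [Fintype W] [DecidableEq W] {A : Matrix W W ℝ}
    (hA : A.IsHermitian) : ∃ σ : Fin (Fintype.card W) ≃ W,
      Monotone (fun k => hA.eigenvalues (σ k)) ∧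
      ∀ (k : ℕ) (h : k < Fintype.card W), kthEig A k = hA.eigenvalues (σ ⟨k, h⟩) := by
  refine ⟨(Tuple.sort (hA.eigenvalues ∘ (Fintype.equivFin W).symm)).trans
    (Fintype.equivFin W).symm, ?_, ?_⟩
  · exact Tuple.monotone_sort (hA.eigenvalues ∘ (Fintype.equivFin W).symm)
  · intro k h
    rw [kthEig, dif_pos hA, dif_pos h]
    rfl

/-- An eigenvalue which bounds the quadratic form from below is the smallest eigenvalue. -/
lemma minEig_eq_of_le {W : Type*} [Fintype W] [DecidableEq W] {A : Matrix W W ℝ}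
    (hA : A.IsHermitian) {c : ℝ} {x : W → ℝ} (hx : x ≠ 0) (hAx : A *ᵥ x = c • x)
    (hle : ∀ y : W → ℝ, c * (y ⬝ᵥ y) ≤ y ⬝ᵥ (A *ᵥ y)) : minEig A = c := by
  obtain ⟨e, he, h1, hexp, hsymm⟩ := spectral_expansion hA
  obtain ⟨σ, hmono, hk⟩ := kthEig_enum hA
  obtain ⟨w, -⟩ := Function.ne_iff.mp hx
  have hpos : 0 < Fintype.card W := Fintype.card_pos_iff.mpr ⟨w⟩
  rw [minEig, hk 0 hpos]
  apply le_antisymm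
  · obtain ⟨i, hi⟩ : ∃ i, e i ⬝ᵥ x ≠ 0 := by
      by_contra! hcon
      apply hx
      rw [← dotProduct_self_eq_zero, hexp]
      simp [hcon]
    have h := hsymm i x
    rw [hAx, dotProduct_smul, smul_eq_mul] at h
    rw [mul_right_cancel₀ hi h]
    have := hmono (a := ⟨0, hpos⟩) (b := σ.symm i) (Fin.mk_le_of_le_val (Nat.zero_le _))
    simpa using this
  · have := hle (e (σ ⟨0, hpos⟩))
    rw [hsymm, h1] at this
    linarith

/-! ### The Laplacian form and the sign pattern of a Fiedler vector -/

section Laplacian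

variable {V : Type*} [Fintype V] [DecidableEq V] (G : SimpleGraph V) [DecidableRel G.Adj]

lemma lapMatrix_mulVec_eq_sum (x : V → ℝ) (v : V) :
    (G.lapMatrix ℝ *ᵥ x) v = ∑ u, if G.Adj v u then x v - x u else 0 := by
  rw [SimpleGraph.lapMatrix_mulVec_apply, SimpleGraph.degree_eq_sum_if_adj, Finset.sum_mul,
    SimpleGraph.neighborFinset_eq_filter, Finset.sum_filter, ← Finset.sum_sub_distrib]
  refine Finset.sum_congr rfl fun u _ => ?_
  split_ifs <;> simp

lemma lapMatrix_form_comm (x y : V → ℝ) :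
    x ⬝ᵥ (G.lapMatrix ℝ *ᵥ y) = y ⬝ᵥ (G.lapMatrix ℝ *ᵥ x) := by
  rw [dotProduct_mulVec, ← mulVec_transpose, (G.isSymm_lapMatrix ℝ).eq, dotProduct_comm]

lemma lapMatrix_form_self (x : V → ℝ) :
    x ⬝ᵥ (G.lapMatrix ℝ *ᵥ x) = (∑ i, ∑ j, if G.Adj i j then (x i - x j) ^ 2 else 0) / 2 := by
  rw [← SimpleGraph.lapMatrix_toLinearMap₂', toLinearMap₂'_apply']

lemma lapMatrix_form_add (x y : V → ℝ) (h : x ⬝ᵥ (G.lapMatrix ℝ *ᵥ y) = 0) (a b : ℝ) :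
    (a • x + b • y) ⬝ᵥ (G.lapMatrix ℝ *ᵥ (a • x + b • y)) =
      a ^ 2 * (x ⬝ᵥ (G.lapMatrix ℝ *ᵥ x)) + b ^ 2 * (y ⬝ᵥ (G.lapMatrix ℝ *ᵥ y)) := by
  have h' := h
  rw [lapMatrix_form_comm] at h'
  simp only [mulVec_add, mulVec_smul, add_dotProduct, dotProduct_add, smul_dotProduct,
    dotProduct_smul, smul_eq_mul, h, h']
  ring

omit [DecidableEq V] in
lemma dotProduct_self_add (x y : V → ℝ) (h : x ⬝ᵥ y = 0) (a b : ℝ) :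
    (a • x + b • y) ⬝ᵥ (a • x + b • y) = a ^ 2 * (x ⬝ᵥ x) + b ^ 2 * (y ⬝ᵥ y) := by
  have h' := h
  rw [dotProduct_comm] at h'
  simp only [add_dotProduct, dotProduct_add, smul_dotProduct, dotProduct_smul, smul_eq_mul, h, h']
  ring

/-- Vectors with disjoint supports not joined by an edge are orthogonal for both forms. -/
lemma separated_orthogonal {x y : V → ℝ}
    (h : ∀ u v, x u ≠ 0 → y v ≠ 0 → u ≠ v ∧ ¬ G.Adj u v) :
    x ⬝ᵥ y = 0 ∧ x ⬝ᵥ (G.lapMatrix ℝ *ᵥ y) = 0 := by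
  constructor
  · refine Finset.sum_eq_zero fun u _ => ?_
    by_contra hne
    exact (h u u (left_ne_zero_of_mul hne) (right_ne_zero_of_mul hne)).1 rfl
  · refine Finset.sum_eq_zero fun u _ => ?_
    by_cases hu : x u = 0
    · simp [hu]
    rw [lapMatrix_mulVec_eq_sum, Finset.sum_eq_zero, mul_zero]
    intro v _
    split_ifs with huv
    · have h1 : y u = 0 := by_contra fun hy => (h u u hu hy).1 rfl
      have h2 : y v = 0 := by_contra fun hy => (h u v hu hy).2 huv
      simp [h1, h2]
    · rfl

lemma lapMatrix_form_abs_le (x : V → ℝ) :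
    |x| ⬝ᵥ (G.lapMatrix ℝ *ᵥ |x|) ≤ x ⬝ᵥ (G.lapMatrix ℝ *ᵥ x) := by
  rw [lapMatrix_form_self, lapMatrix_form_self]
  gcongr (∑ i, ∑ j, ?_) / 2 with i _ j _
  split_ifs
  · exact sq_le_sq.mpr (abs_abs_sub_abs_le _ _)
  · rfl

/-- Equality of the forms at `|x|` and `x` forces weakly equal signs along each edge. -/
lemma mul_nonneg_of_form_abs_eq (x : V → ℝ)
    (h : x ⬝ᵥ (G.lapMatrix ℝ *ᵥ x) ≤ |x| ⬝ᵥ (G.lapMatrix ℝ *ᵥ |x|)) {u v : V}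
    (huv : G.Adj u v) : 0 ≤ x u * x v := by
  have hle : ∀ i j, (if G.Adj i j then (|x| i - |x| j) ^ 2 else 0) ≤
      (if G.Adj i j then (x i - x j) ^ 2 else 0) := by
    intro i j
    split_ifs
    · exact sq_le_sq.mpr (abs_abs_sub_abs_le _ _)
    · rfl
  have heq := le_antisymm h (lapMatrix_form_abs_le G x)
  rw [lapMatrix_form_self, lapMatrix_form_self, div_left_inj' two_ne_zero] at heq
  have h1 := (Finset.sum_eq_sum_iff_of_le
    (fun i _ => Finset.sum_le_sum fun j _ => hle i j)).mp heq.symm u (Finset.mem_univ _)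
  have h2 := (Finset.sum_eq_sum_iff_of_le (fun j _ => hle u j)).mp h1 v (Finset.mem_univ _)
  simp only [huv, if_true, Pi.abs_apply] at h2
  have h3 : x u * x v = |x u * x v| := by
    rw [abs_mul]
    nlinarith [sq_abs (x u), sq_abs (x v)]
  rw [h3]
  exact abs_nonneg _

omit [DecidableEq V] in
lemma abs_dotProduct_abs (x : V → ℝ) : |x| ⬝ᵥ |x| = x ⬝ᵥ x := by
  simp [dotProduct]

/-- If `F` has Rayleigh quotient `c` and `c` is a lower bound on mean-zero vectors, then `c` is a
lower bound for every `g` whose support is disjoint from, and not adjacent to, that of `F`: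
a combination of `|g|` and `|F|` has mean zero. -/
lemma form_ge_of_separated {c : ℝ}
    (hc : ∀ h : V → ℝ, ∑ v, h v = 0 → c * (h ⬝ᵥ h) ≤ h ⬝ᵥ (G.lapMatrix ℝ *ᵥ h))
    {F g : V → ℝ} (hF : F ≠ 0) (hFc : F ⬝ᵥ (G.lapMatrix ℝ *ᵥ F) = c * (F ⬝ᵥ F))
    (hsep : ∀ u v, g u ≠ 0 → F v ≠ 0 → u ≠ v ∧ ¬ G.Adj u v) :
    c * (g ⬝ᵥ g) ≤ g ⬝ᵥ (G.lapMatrix ℝ *ᵥ g) := by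
  obtain ⟨o1, o2⟩ := separated_orthogonal G (x := |g|) (y := |F|)
    (fun u v hu hv => hsep u v (by simpa using hu) (by simpa using hv))
  obtain ⟨w, hw⟩ := Function.ne_iff.mp hF
  have hp : 0 < ∑ v, |F| v :=
    Finset.sum_pos' (fun v _ => abs_nonneg _) ⟨w, Finset.mem_univ _, abs_pos.mpr hw⟩
  set p := ∑ v, |F| v with hpdef
  set q := ∑ v, |g| v with hqdef
  have h := hc (p • |g| + (-q) • |F|) (by
    simp only [Pi.add_apply, Pi.smul_apply, smul_eq_mul, Finset.sum_add_distrib,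
      ← Finset.mul_sum]
    rw [← hpdef, ← hqdef]; ring)
  rw [dotProduct_self_add _ _ o1, lapMatrix_form_add G _ _ o2, abs_dotProduct_abs,
    abs_dotProduct_abs] at h
  have h1 := mul_le_mul_of_nonneg_left (lapMatrix_form_abs_le G g) (sq_nonneg p)
  have h2 := mul_le_mul_of_nonneg_left (lapMatrix_form_abs_le G F) (sq_nonneg (-q))
  rw [hFc] at h2
  exact le_of_mul_le_mul_left (by linarith) (pow_pos hp 2)

/-- Cutting off a vector `x` with `x v₀ = 0` to a set `P` does not change `L x` at a point of `P`
whose only possible neighbour outside `P` is `v₀`. -/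
lemma lapMatrix_mulVec_restrict {P : V → Prop} [DecidablePred P] {v₀ : V} {x : V → ℝ}
    (hx : x v₀ = 0) {u : V} (hPu : P u) (hP : ∀ v, G.Adj u v → ¬ P v → v = v₀) :
    (G.lapMatrix ℝ *ᵥ (fun v => if P v then x v else 0)) u = (G.lapMatrix ℝ *ᵥ x) u := by
  rw [lapMatrix_mulVec_eq_sum, lapMatrix_mulVec_eq_sum]
  refine Finset.sum_congr rfl fun v _ => ?_
  by_cases huv : G.Adj u v
  · by_cases hv : P v
    · simp [hPu, hv]
    · simp [hPu, hP v huv hv, hx]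
  · simp [huv]

/-- At a zero `v₀` of an eigenvector of the Laplacian of a forest which has two neighbours `u₁`,
`u₂` in the support, the eigenvalue `c` bounds the Dirichlet form from below as soon as it bounds
the form on mean-zero vectors. -/
lemma dirichlet_form_ge (hG : G.IsAcyclic) {c : ℝ}
    (hc : ∀ h : V → ℝ, ∑ v, h v = 0 → c * (h ⬝ᵥ h) ≤ h ⬝ᵥ (G.lapMatrix ℝ *ᵥ h))
    {f : V → ℝ} (hf : G.lapMatrix ℝ *ᵥ f = c • f) {v₀ u₁ u₂ : V} (hv₀ : f v₀ = 0)
    (ha₁ : G.Adj v₀ u₁) (ha₂ : G.Adj v₀ u₂) (hne : u₁ ≠ u₂) (h₁ : f u₁ ≠ 0) (h₂ : f u₂ ≠ 0)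
    {g : V → ℝ} (hg : g v₀ = 0) : c * (g ⬝ᵥ g) ≤ g ⬝ᵥ (G.lapMatrix ℝ *ᵥ g) := by
  -- The branch at `v₀` containing `u₁`; its complement contains `u₂` since the edge is a bridge.
  let H := G.deleteEdges {s(v₀, u₁)}
  let B : V → Prop := fun v => H.Reachable u₁ v
  have hB₁ : B u₁ := SimpleGraph.Reachable.refl _
  have hB₀ : ¬ B v₀ := fun h =>
    SimpleGraph.isBridge_iff.mp (SimpleGraph.isAcyclic_iff_forall_adj_isBridge.mp hG ha₁) h.symm
  have hcut : ∀ u v, G.Adj u v → B u → ¬ B v → v = v₀ := by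
    intro u v huv hu hv
    have hn : ¬ H.Adj u v := fun h => hv (hu.trans h.reachable)
    simp only [H, SimpleGraph.deleteEdges_adj, Set.mem_singleton_iff, huv, true_and, not_not,
      Sym2.eq_iff] at hn
    rcases hn with ⟨rfl, rfl⟩ | ⟨-, rfl⟩
    · exact absurd hu hB₀
    · rfl
  have hB₂ : ¬ B u₂ := by
    intro h
    refine hB₀ (h.trans (SimpleGraph.Adj.reachable ?_))
    simp only [H, SimpleGraph.deleteEdges_adj, ha₂.symm, Set.mem_singleton_iff, true_and,
      Sym2.eq_iff]
    rintro (⟨h1, -⟩ | ⟨h1, -⟩)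
    · exact ha₂.ne h1.symm
    · exact hne h1.symm
  have hray : ∀ (P : V → Prop) [DecidablePred P],
      (∀ u v, u ≠ v₀ → G.Adj u v → P u → ¬ P v → v = v₀) →
      (fun v => if P v then f v else 0) ⬝ᵥ (G.lapMatrix ℝ *ᵥ (fun v => if P v then f v else 0)) =
      c * ((fun v => if P v then f v else 0) ⬝ᵥ (fun v => if P v then f v else 0)) := by
    intro P _ hP
    simp only [dotProduct]
    rw [Finset.mul_sum]
    refine Finset.sum_congr rfl fun u _ => ?_
    by_cases hu : P u
    · by_cases hu0 : u = v₀
      · simp [hu0, hv₀]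
      rw [lapMatrix_mulVec_restrict G hv₀ hu (fun v huv => hP u v hu0 huv hu), hf]
      simp [hu]; ring
    · simp [hu]
  have hcut' : ∀ u v, u ≠ v₀ → G.Adj u v → ¬ B u → ¬ ¬ B v → v = v₀ :=
    fun u v hu huv hBu hBv => absurd (hcut v u huv.symm (not_not.mp hBv) hBu) hu
  have hsep : ∀ x y : V → ℝ, y v₀ = 0 → ∀ u v, (if B u then x u else 0) ≠ 0 →
      (if ¬ B v then y v else 0) ≠ 0 → u ≠ v ∧ ¬ G.Adj u v := by
    intro x y hy u v hu hv
    have hu' : B u := by by_contra h; simp [h] at hu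
    have hv' : ¬ B v := by by_contra h; simp [h] at hv
    refine ⟨fun h => hv' (h ▸ hu'), fun h => hv ?_⟩
    rw [hcut u v h hu' hv', hy]; simp
  have k1 : c * ((fun v => if B v then g v else 0) ⬝ᵥ (fun v => if B v then g v else 0)) ≤ _ :=
    form_ge_of_separated G hc (F := fun v => if ¬ B v then f v else 0)
      (fun h => h₂ (by simpa [hB₂] using congrFun h u₂)) (hray (fun v => ¬ B v) hcut')
      (hsep g f hv₀)
  have k2 : c * ((fun v => if ¬ B v then g v else 0) ⬝ᵥ (fun v => if ¬ B v then g v else 0)) ≤ _ :=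
    form_ge_of_separated G hc (F := fun v => if B v then f v else 0)
      (fun h => h₁ (by simpa [hB₁] using congrFun h u₁))
      (hray B (fun u v _ => hcut u v))
      (fun u v hu hv => ⟨(hsep f g hg v u hv hu).1.symm,
        fun h => (hsep f g hg v u hv hu).2 h.symm⟩)
  obtain ⟨o1, o2⟩ := separated_orthogonal G (hsep g g hg)
  have hsum : g = (1 : ℝ) • (fun v => if B v then g v else 0) +
      (1 : ℝ) • (fun v => if ¬ B v then g v else 0) := by
    ext v
    by_cases hv : B v <;> simp [hv]
  rw [hsum, dotProduct_self_add _ _ o1, lapMatrix_form_add G _ _ o2]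
  linarith

/-- If `c` bounds the Dirichlet form from below, a `c`-eigenvector `f` with `f v₀ = 0` never has
opposite signs at the ends of an edge, and its zeros other than `v₀` propagate to neighbours. This
is where `|f|` being another minimiser of the Dirichlet form enters. -/
lemma sign_edge {c : ℝ} {v₀ : V}
    (hc : ∀ g : V → ℝ, g v₀ = 0 → c * (g ⬝ᵥ g) ≤ g ⬝ᵥ (G.lapMatrix ℝ *ᵥ g))
    {f : V → ℝ} (hf : G.lapMatrix ℝ *ᵥ f = c • f) (hv₀ : f v₀ = 0)
    {u v : V} (huv : G.Adj u v) (hu : u ≠ v₀) : 0 ≤ f u * f v ∧ (f u = 0 → f v = 0) := by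
  have hff : f ⬝ᵥ (G.lapMatrix ℝ *ᵥ f) = c * (f ⬝ᵥ f) := by rw [hf, dotProduct_smul, smul_eq_mul]
  have habs : c * (f ⬝ᵥ f) ≤ |f| ⬝ᵥ (G.lapMatrix ℝ *ᵥ |f|) := by
    rw [← abs_dotProduct_abs]; exact hc _ (by simp [hv₀])
  have habs' := lapMatrix_form_abs_le G f
  refine ⟨mul_nonneg_of_form_abs_eq G f (hff.trans_le habs) huv, fun h0 => ?_⟩
  -- `|f|` minimises the Dirichlet form; the variation in the direction `u` vanishes.
  have hvar : (G.lapMatrix ℝ *ᵥ |f|) u = 0 := by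
    set e : V → ℝ := Pi.single u 1 with he
    have hd := discrim_le_zero (a := e ⬝ᵥ (G.lapMatrix ℝ *ᵥ e) - c)
      (b := 2 * (G.lapMatrix ℝ *ᵥ |f|) u) (c := 0) (fun t => by
        have h := hc (|f| + t • e) (by simp [hv₀, he, Ne.symm hu])
        have hcomm := lapMatrix_form_comm G |f| e
        have hs : e ⬝ᵥ (G.lapMatrix ℝ *ᵥ |f|) = (G.lapMatrix ℝ *ᵥ |f|) u := by simp [he]
        have h1 : |f| ⬝ᵥ e = 0 := by simp [he, h0]
        have h2 : e ⬝ᵥ |f| = 0 := by simp [he, h0]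
        have h3 : e ⬝ᵥ e = 1 := by simp [he]
        simp only [mulVec_add, mulVec_smul, add_dotProduct, dotProduct_add, smul_dotProduct,
          dotProduct_smul, smul_eq_mul, hcomm, hs, h1, h2, h3, abs_dotProduct_abs] at h
        linarith)
    rw [discrim] at hd
    nlinarith [sq_nonneg ((G.lapMatrix ℝ *ᵥ |f|) u)]
  rw [lapMatrix_mulVec_eq_sum] at hvar
  have hz := (Finset.sum_eq_zero_iff_of_nonpos (fun w _ => by
    split_ifs
    · simp [h0]
    · rfl)).mp hvar v (Finset.mem_univ _)
  simpa [huv, h0] using hz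

/-- Variational lower bound for the second smallest Laplacian eigenvalue. -/
lemma kthEig_one_le_form (hcard : 1 < Fintype.card V) (h : V → ℝ) (hh : ∑ v, h v = 0) :
    kthEig (G.lapMatrix ℝ) 1 * (h ⬝ᵥ h) ≤ h ⬝ᵥ (G.lapMatrix ℝ *ᵥ h) := by
  have hA := G.isHermitian_lapMatrix ℝ
  have hnn : 0 ≤ h ⬝ᵥ (G.lapMatrix ℝ *ᵥ h) := by
    rw [lapMatrix_form_self]; positivity
  rcases le_or_gt (kthEig (G.lapMatrix ℝ) 1) 0 with hneg | hpos
  · exact (mul_nonpos_of_nonpos_of_nonneg hneg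
      (Finset.sum_nonneg fun v _ => mul_self_nonneg _)).trans hnn
  obtain ⟨e, he, h1, hexp, hsymm⟩ := spectral_expansion hA
  obtain ⟨σ, hmono, hk⟩ := kthEig_enum hA
  rw [hk 1 hcard] at hpos ⊢
  set i₀ := σ ⟨0, by omega⟩ with hi₀
  have hge : ∀ i, i ≠ i₀ → hA.eigenvalues (σ ⟨1, hcard⟩) ≤ hA.eigenvalues i := by
    intro i hi
    have hle : (⟨1, hcard⟩ : Fin (Fintype.card V)) ≤ σ.symm i := by
      rw [Fin.le_def]
      by_contra hlt
      apply hi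
      rw [hi₀, ← Equiv.symm_apply_eq]
      ext
      simp only at hlt ⊢
      omega
    simpa using hmono hle
  -- The constant vector lies in the kernel, so only the lowest eigenvector meets it.
  have hone : ∀ i, i ≠ i₀ → e i ⬝ᵥ (fun _ => (1 : ℝ)) = 0 := by
    intro i hi
    have h2 := hsymm i (fun _ => 1)
    rw [SimpleGraph.lapMatrix_mulVec_const_eq_zero, dotProduct_zero] at h2
    exact (mul_eq_zero.mp h2.symm).resolve_left (hpos.trans_le (hge i hi)).ne'
  have hsingle : ∀ x : V → ℝ, x ⬝ᵥ (fun _ => (1 : ℝ)) =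
      (e i₀ ⬝ᵥ x) * (e i₀ ⬝ᵥ (fun _ => (1 : ℝ))) := by
    intro x
    rw [hexp]
    exact Finset.sum_eq_single i₀ (fun i _ hi => by rw [hone i hi, mul_zero]) (by simp)
  have hne : e i₀ ⬝ᵥ (fun _ => (1 : ℝ)) ≠ 0 := by
    intro hz
    have h2 := hsingle (fun _ => 1)
    rw [hz] at h2
    simp [dotProduct] at h2
    omega
  have horth : e i₀ ⬝ᵥ h = 0 := by
    have h2 := hsingle h
    have h3 : h ⬝ᵥ (fun _ => (1 : ℝ)) = 0 := by simpa [dotProduct] using hh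
    rw [h3] at h2
    exact (mul_eq_zero.mp h2.symm).resolve_right hne
  rw [hexp h h, hexp h (G.lapMatrix ℝ *ᵥ h), Finset.mul_sum]
  refine Finset.sum_le_sum fun i _ => ?_
  rw [hsymm]
  by_cases hi : i = i₀
  · rw [hi, horth]; simp
  · nlinarith [mul_le_mul_of_nonneg_right (hge i hi) (mul_self_nonneg (e i ⬝ᵥ h))]

end Laplacian

/-! ### Dirichlet matrices of nodal domains -/

section Domain

variable {V : Type*} [Fintype V] [DecidableEq V] (G : SimpleGraph V) [DecidableRel G.Adj]

/-- On a vertex set `p` containing all neighbours of its points other than `v₀`, the Dirichlet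
matrix acts as the Laplacian of the whole graph on vectors vanishing at `v₀`. -/
lemma dirichletMatrix_mulVec {p : V → Prop} {v₀ : V}
    [Fintype {v // p v}] [DecidableEq {v // p v}]
    [Fintype {a : {v // p v} | (a : V) ≠ v₀}]
    (hp : ∀ u v, p u → u ≠ v₀ → G.Adj u v → p v) {g : V → ℝ} (hg : g v₀ = 0)
    (a : {a : {v // p v} | (a : V) ≠ v₀}) :
    (dirichletMatrix (fun a b : {v // p v} => if G.Adj a.1 b.1 then (1 : ℝ) else 0)
      {a : {v // p v} | (a : V) ≠ v₀} *ᵥ (fun a => g a.1.1)) a =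
      (G.lapMatrix ℝ *ᵥ g) a.1.1 := by
  have hsum : ∀ k : V → ℝ, (∑ b : {v // p v}, if G.Adj a.1.1 b.1 then k b.1 else 0) =
      ∑ v, if G.Adj a.1.1 v then k v else 0 := by
    intro k
    refine Finset.sum_of_injOn Subtype.val Subtype.val_injective.injOn (by simp) ?_ (by simp)
    intro v _ hv
    rw [if_neg]
    exact fun h => hv ⟨⟨v, hp _ _ a.1.2 a.2 h⟩, by simp⟩
  have hsum' : ∀ k : {v // p v} → ℝ, (∀ b, b.1 = v₀ → k b = 0) →
      (∑ b : {a : {v // p v} | (a : V) ≠ v₀}, k b.1) = ∑ b, k b := by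
    intro k hk
    refine Finset.sum_of_injOn Subtype.val Subtype.val_injective.injOn (by simp) ?_ (by simp)
    intro b _ hb
    apply hk
    by_contra hne
    exact hb ⟨⟨b, hne⟩, by simp⟩
  rw [mulVec, dotProduct]
  simp only [dirichletMatrix, submatrix_apply]
  rw [hsum' (fun b => wLap (fun a b : {v // p v} => if G.Adj a.1 b.1 then (1 : ℝ) else 0) a.1 b *
    g b.1) (fun b hb => by simp [hb, hg])]
  simp only [wLap, Matrix.sub_apply, of_apply, sub_mul, Finset.sum_sub_distrib, ite_mul, one_mul,
    zero_mul, diagonal_apply]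
  rw [Finset.sum_ite_eq, if_pos (Finset.mem_univ _)]
  have e1 := hsum (fun _ => 1)
  have e2 := hsum g
  rw [lapMatrix_mulVec_eq_sum]
  simp only [← Finset.sum_filter] at e1 e2 ⊢
  rw [e1, e2, Finset.sum_mul, ← Finset.sum_sub_distrib]
  simp

/-- If `p` contains all neighbours of its points other than `v₀`, `c` bounds the Dirichlet form
from below, and the `c`-eigenvector `f` is not identically zero on `p`, then `c` is the first
Dirichlet eigenvalue of `p`, and `f` restricts to an eigenvector. -/
lemma dirichlet_domain {p : V → Prop} {v₀ : V}
    [Fintype {v // p v}] [DecidableEq {v // p v}]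
    [Fintype {a : {v // p v} | (a : V) ≠ v₀}] [DecidableEq {a : {v // p v} | (a : V) ≠ v₀}]
    (hp : ∀ u v, p u → u ≠ v₀ → G.Adj u v → p v) {c : ℝ}
    (hc : ∀ g : V → ℝ, g v₀ = 0 → c * (g ⬝ᵥ g) ≤ g ⬝ᵥ (G.lapMatrix ℝ *ᵥ g))
    {f : V → ℝ} (hf : G.lapMatrix ℝ *ᵥ f = c • f) (hv₀ : f v₀ = 0) {w : V} (hw : p w)
    (hfw : f w ≠ 0) :
    minEig (dirichletMatrix (fun a b : {v // p v} => if G.Adj a.1 b.1 then (1 : ℝ) else 0)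
      {a : {v // p v} | (a : V) ≠ v₀}) = c ∧
    dirichletMatrix (fun a b : {v // p v} => if G.Adj a.1 b.1 then (1 : ℝ) else 0)
      {a : {v // p v} | (a : V) ≠ v₀} *ᵥ (fun a => f a.1.1) = c • (fun a => f a.1.1) := by
  have heig : dirichletMatrix (fun a b : {v // p v} => if G.Adj a.1 b.1 then (1 : ℝ) else 0)
      {a : {v // p v} | (a : V) ≠ v₀} *ᵥ (fun a => f a.1.1) = c • (fun a => f a.1.1) := by
    ext a
    rw [dirichletMatrix_mulVec G hp hv₀, hf]
    rfl
  refine ⟨minEig_eq_of_le ?_ ?_ heig ?_, heig⟩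
  · apply Matrix.IsHermitian.submatrix
    apply Matrix.IsHermitian.sub
    · simp [Matrix.IsHermitian]
    · ext a b
      simp [G.adj_comm]
  · intro h
    exact hfw (congrFun h ⟨⟨w, hw⟩, fun (h : w = v₀) => hfw (h ▸ hv₀)⟩)
  · intro y
    -- Extend `y` by zero to the whole graph.
    let g : V → ℝ := fun v => if h : ∃ h : p v, v ≠ v₀ then y ⟨⟨v, h.1⟩, h.2⟩ else 0
    have hg0 : g v₀ = 0 := by simp [g]
    have hgy : y = fun a => g a.1.1 := by
      ext a
      have : ∃ _ : p a.1.1, a.1.1 ≠ v₀ := ⟨a.1.2, a.2⟩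
      simp only [g, dif_pos this]
    have hsum : ∀ k : V → ℝ, (∑ a : {a : {v // p v} | (a : V) ≠ v₀}, g a.1.1 * k a.1.1) =
        ∑ v, g v * k v := by
      intro k
      refine Finset.sum_of_injOn (fun a => a.1.1)
        (Subtype.val_injective.comp Subtype.val_injective).injOn (by simp) ?_ (by simp)
      intro v _ hv
      have : ¬ ∃ _ : p v, v ≠ v₀ := fun ⟨h1, h2⟩ => hv ⟨⟨⟨v, h1⟩, h2⟩, by simp⟩
      simp only [g, dif_neg this, zero_mul]
    have h := hc g hg0
    rw [hgy]
    simp only [dotProduct] at h ⊢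
    rw [hsum g]
    simp only [dirichletMatrix_mulVec G hp hg0]
    rwa [hsum]

end Domain

/-- in the characteristic-vertex case, the first Dirichlet
eigenvalue of each closed nodal domain (with boundary vertex `v₀`) equals the
algebraic connectivity, with the restrictions of `±f` as eigenvectors. -/
theorem nodal_domain_dirichlet_eq_algConn {V : Type*} [Fintype V] [DecidableEq V]
    (T : SimpleGraph V) (hT : T.IsTree)
    (f : V → ℝ) (hf : f ≠ 0)
    (heig : (T.lapMatrix ℝ) *ᵥ f = algConn T • f)
    (v₀ : V) (hv₀ : f v₀ = 0) (hadj : ∃ u, T.Adj v₀ u ∧ f u ≠ 0) :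
    minEig (dirichletMatrix
        (fun a b : {v : V // 0 ≤ f v} => if T.Adj a.1 b.1 then (1 : ℝ) else 0)
        {a : {v : V // 0 ≤ f v} | (a : V) ≠ v₀}) = algConn T ∧
    minEig (dirichletMatrix
        (fun a b : {v : V // f v ≤ 0} => if T.Adj a.1 b.1 then (1 : ℝ) else 0)
        {a : {v : V // f v ≤ 0} | (a : V) ≠ v₀}) = algConn T ∧
    (dirichletMatrix
        (fun a b : {v : V // 0 ≤ f v} => if T.Adj a.1 b.1 then (1 : ℝ) else 0)
        {a : {v : V // 0 ≤ f v} | (a : V) ≠ v₀}) *ᵥ (fun a => f a.1.1) =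
      algConn T • (fun a => f a.1.1) ∧
    (dirichletMatrix
        (fun a b : {v : V // f v ≤ 0} => if T.Adj a.1 b.1 then (1 : ℝ) else 0)
        {a : {v : V // f v ≤ 0} | (a : V) ≠ v₀}) *ᵥ (fun a => -f a.1.1) =
      algConn T • (fun a => -f a.1.1) := by
  obtain ⟨u, hu, hfu⟩ := hadj
  have hcard : 1 < Fintype.card V := Fintype.one_lt_card_iff.mpr ⟨v₀, u, hu.ne⟩
  -- The eigenvalue equation at `v₀` is a zero-sum condition on the neighbours.
  have hsum : ∑ w, (if T.Adj v₀ w then f w else 0) = 0 := by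
    have h := congrFun heig v₀
    rw [lapMatrix_mulVec_eq_sum] at h
    simp only [hv₀, zero_sub, Pi.smul_apply, smul_zero] at h
    rw [← neg_eq_zero, ← Finset.sum_neg_distrib]
    refine Eq.trans ?_ h
    exact Finset.sum_congr rfl fun w _ => by split_ifs <;> simp
  have hne : ∃ w ∈ Finset.univ, (if T.Adj v₀ w then f w else 0) ≠ 0 :=
    ⟨u, Finset.mem_univ _, by simpa [hu] using hfu⟩
  obtain ⟨u₁, ha₁, h₁⟩ : ∃ w, T.Adj v₀ w ∧ 0 < f w := by
    obtain ⟨w, -, hw⟩ := Finset.exists_pos_of_sum_zero_of_exists_nonzero _ hsum hne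
    split_ifs at hw with h
    · exact ⟨w, h, hw⟩
    · exact absurd hw (lt_irrefl _)
  obtain ⟨u₂, ha₂, h₂⟩ : ∃ w, T.Adj v₀ w ∧ f w < 0 := by
    have hsum' : ∑ w, -(if T.Adj v₀ w then f w else 0) = 0 := by
      rw [Finset.sum_neg_distrib, hsum, neg_zero]
    obtain ⟨w, -, hw⟩ := Finset.exists_pos_of_sum_zero_of_exists_nonzero _ hsum'
      (by simpa using hne)
    split_ifs at hw with h
    · exact ⟨w, h, by linarith⟩
    · simp at hw
  have hc : ∀ g : V → ℝ, g v₀ = 0 → algConn T * (g ⬝ᵥ g) ≤ g ⬝ᵥ (T.lapMatrix ℝ *ᵥ g) :=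
    fun g hg => dirichlet_form_ge T hT.2 (kthEig_one_le_form T hcard) heig hv₀ ha₁ ha₂
      (fun h => (h ▸ h₁).not_gt h₂) h₁.ne' h₂.ne hg
  have hsign := fun (a b : V) (ha : a ≠ v₀) (hab : T.Adj a b) =>
    sign_edge T hc heig hv₀ hab ha
  have hpos : ∀ a b, 0 ≤ f a → a ≠ v₀ → T.Adj a b → 0 ≤ f b := by
    intro a b h0 ha hab
    obtain ⟨hm, hz⟩ := hsign a b ha hab
    rcases h0.eq_or_lt with h | h
    · exact (hz h.symm).ge
    · exact nonneg_of_mul_nonneg_right hm h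
  have hneg : ∀ a b, f a ≤ 0 → a ≠ v₀ → T.Adj a b → f b ≤ 0 := by
    intro a b h0 ha hab
    obtain ⟨hm, hz⟩ := hsign a b ha hab
    rcases h0.eq_or_lt with h | h
    · exact (hz h).le
    · exact nonpos_of_mul_nonneg_right hm h
  obtain ⟨p1, p2⟩ := dirichlet_domain T (p := fun v => 0 ≤ f v) hpos hc heig hv₀ h₁.le h₁.ne'
  have heig' : T.lapMatrix ℝ *ᵥ (-f) = algConn T • (-f) := by
    rw [mulVec_neg, heig, smul_neg]
  obtain ⟨n1, n2⟩ := dirichlet_domain T (p := fun v => f v ≤ 0) hneg hc heig'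
    (by simp [hv₀]) h₂.le (by simpa using h₂.ne)
  exact ⟨p1, n1, p2, n2⟩
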